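/- Let A be a module with an endomorphism N satisfying N^{n+1} = 0, and let M_• be the convolution filtration of the kernel filtration F_p A = ker(N^{p+1}) and the image filtration G^q A = im(N^q). Then M_• is the monodromy filtration of N; that is, it satisfies: (1) M_r A = A for r ≥ n and M_r A = 0 for r ≤ −n−1; (2) N(M_r A) ⊆ M_{r−2} A for all r ∈ ℤ; (3) for every r ≥ 0 the map N^r induces an isomorphism Gr^M_r A ≅ Gr^M_{−r} A; and these three properties characterize M_• uniquely among increasing filtrations of A. -/

import Mathlib

/-!
# Statement 1

For a module `A` with an endomorphism `N` satisfying `N^(n+1) = 0`, the convolution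
filtration of the kernel filtration `F_p A = ker (N^(p+1))` and the image filtration
`G^q A = im (N^q)` is the monodromy filtration of `N`: it satisfies
(1) `M_r A = A` for `r ≥ n` and `M_r A = 0` for `r ≤ -n-1`;
(2) `N (M_r A) ⊆ M_(r-2) A` for all `r : ℤ`;
(3) for every `r ≥ 0`, `N^r` induces an isomorphism `Gr^M_r A ≅ Gr^M_(-r) A`;
and these properties characterize the filtration uniquely among increasing filtrations.
-/

open LinearMap

section

variable {R A : Type*} [CommRing R] [AddCommGroup A] [Module R A]

/-- The graded piece `Q / P` of two filtration steps `P ⊆ Q` of `A`. -/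
abbrev filGradedPiece (Q P : Submodule R A) : Type _ :=
  Q ⧸ (P.comap Q.subtype)

/-- The kernel filtration `F_p A = ker (N^(p+1))` for `p ≥ 0`. -/
def kerFil (N : A →ₗ[R] A) (p : ℕ) : Submodule R A :=
  LinearMap.ker (N ^ (p + 1))

/-- The image filtration `G^q A = im (N^q)`; note `G^0 A = A`. -/
def imFil (N : A →ₗ[R] A) (q : ℕ) : Submodule R A :=
  LinearMap.range (N ^ q)

/-- The convolution filtration `M_r A = Σ_{p-q=r} (F_p A ⊓ G^q A)`. -/
def convFil (N : A →ₗ[R] A) (r : ℤ) : Submodule R A :=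
  ⨆ pq : {pq : ℕ × ℕ // (pq.1 : ℤ) - (pq.2 : ℤ) = r}, kerFil N pq.1.1 ⊓ imFil N pq.1.2

/-- `N^r` induces an isomorphism `Gr^M_r A ≅ Gr^M_(-r) A` for the filtration `M`. -/
def PowInducesIso (N : A →ₗ[R] A) (M : ℤ → Submodule R A) (r : ℕ) : Prop :=
  ∃ e : filGradedPiece (M (r : ℤ)) (M ((r : ℤ) - 1)) ≃ₗ[R]
      filGradedPiece (M (-(r : ℤ))) (M (-(r : ℤ) - 1)),
    ∀ (x : A) (hx : x ∈ M (r : ℤ)) (hx' : (N ^ r) x ∈ M (-(r : ℤ))),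
      e (Submodule.Quotient.mk ⟨x, hx⟩) = Submodule.Quotient.mk ⟨(N ^ r) x, hx'⟩

/-- `M` is the monodromy filtration of `N` (with `N^(n+1) = 0`): an increasing filtration
with `M_r = A` for `r ≥ n`, `M_r = 0` for `r ≤ -n-1`, `N M_r ⊆ M_(r-2)`, and such that
`N^r` induces an isomorphism `Gr^M_r A ≅ Gr^M_(-r) A` for every `r ≥ 0`. -/
def IsMonodromyFiltration (N : A →ₗ[R] A) (n : ℕ) (M : ℤ → Submodule R A) : Prop :=
  Monotone M ∧
  (∀ r : ℤ, (n : ℤ) ≤ r → M r = ⊤) ∧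
  (∀ r : ℤ, r ≤ -(n : ℤ) - 1 → M r = ⊥) ∧
  (∀ r : ℤ, ∀ x ∈ M r, N x ∈ M (r - 2)) ∧
  (∀ r : ℕ, PowInducesIso N M r)

end

/-!
In a monodromy filtration, surjectivity on graded pieces and descending induction give
`M_(-r) = N^r M_r` for `r ≥ 0`, and injectivity says that `x ∈ M_(r+1)` lies in `M_r` exactly when
`N^(r+1) x ∈ M_(-r-2)`. Together these determine `M_r` from `M_(r+1)` and `M_(r+2)`, hence all of
`M` by descending induction from `M_r = A`.

For the convolution filtration, `N^k (ker N^(p+k+1) ∩ im N^q) = ker N^(p+1) ∩ im N^(q+k)` yields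
both the shift by `-2` and `M_(-r) = N^r M_r`. If `N^r x ∈ M_(-r-1) = N^(r+1) M_(r+1)`, then
`x ∈ N M_(r+1) + ker N^r ⊆ M_(r-1)`, which is the injectivity on graded pieces.
-/

section GradedPiece

variable {R A B : Type*} [CommRing R] [AddCommGroup A] [Module R A] [AddCommGroup B] [Module R B]
  {Q P : Submodule R A} {Q' P' : Submodule R B} {f : A →ₗ[R] B}

/-- The map `Q / P → Q' / P'` of graded pieces induced by a linear map with `f Q ⊆ Q'` and
`f P ⊆ P'`. -/
def filGradedPiece.map (f : A →ₗ[R] B) (hQ : Q ≤ Q'.comap f) (hP : P ≤ P'.comap f) :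
    filGradedPiece Q P →ₗ[R] filGradedPiece Q' P' :=
  Submodule.mapQ _ _ (f.restrict hQ) fun x hx => hP (x := x) hx

theorem filGradedPiece.map_mk (hQ : Q ≤ Q'.comap f) (hP : P ≤ P'.comap f) (x : Q) :
    filGradedPiece.map f hQ hP (Submodule.Quotient.mk x) =
      Submodule.Quotient.mk ⟨f x, hQ x.2⟩ :=
  rfl

theorem filGradedPiece.map_injective_iff (hQ : Q ≤ Q'.comap f) (hP : P ≤ P'.comap f) :
    Function.Injective (filGradedPiece.map f hQ hP) ↔ Q ⊓ P'.comap f ≤ P := by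
  rw [injective_iff_map_eq_zero, (Submodule.Quotient.mk_surjective _).forall, Subtype.forall]
  simp only [map_mk, Submodule.Quotient.mk_eq_zero]
  exact ⟨fun h x hx => h x hx.1 hx.2, fun h x hxQ hxP' => h ⟨hxQ, hxP'⟩⟩

theorem filGradedPiece.map_surjective_iff (hQ : Q ≤ Q'.comap f) (hP : P ≤ P'.comap f) :
    Function.Surjective (filGradedPiece.map f hQ hP) ↔ Q' ≤ Q.map f ⊔ P' := by
  rw [Function.Surjective, (Submodule.Quotient.mk_surjective _).forall, Subtype.forall]
  refine forall₂_congr fun y hy => ?_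
  rw [(Submodule.Quotient.mk_surjective _).exists, Subtype.exists]
  simp only [map_mk, eq_comm (b := Submodule.Quotient.mk (⟨y, hy⟩ : Q')), Submodule.Quotient.eq]
  constructor
  · rintro ⟨x, hx, hyx⟩
    exact Submodule.mem_sup.2 ⟨f x, Submodule.mem_map_of_mem hx, y - f x, hyx, by abel⟩
  · intro hy_sup
    obtain ⟨_, ⟨x, hx, rfl⟩, z, hz, rfl⟩ := Submodule.mem_sup.1 hy_sup
    exact ⟨x, hx, by simpa using hz⟩

end GradedPiece

theorem le_comap_pow_of_sub {R A ι : Type*} [Semiring R] [AddCommMonoid A] [Module R A]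
    [AddGroup ι] {N : A →ₗ[R] A} {M : ι → Submodule R A} {d : ι}
    (hM : ∀ r, ∀ x ∈ M r, N x ∈ M (r - d)) (k : ℕ) {r s : ι} (hrs : r - k • d = s) :
    M r ≤ (M s).comap (N ^ k) := by
  induction k generalizing r with
  | zero =>
    obtain rfl : r = s := by simpa using hrs
    rfl
  | succ k ih =>
    intro x hx
    rw [succ_nsmul, sub_add_eq_sub_sub_swap] at hrs
    rw [pow_succ]
    exact ih hrs (hM r x hx)

section PowInducesIso

variable {R A : Type*} [CommRing R] [AddCommGroup A] [Module R A] {N : A →ₗ[R] A}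
  {M : ℤ → Submodule R A}

theorem powInducesIso_iff_bijective {r : ℕ} (hQ : M r ≤ (M (-r)).comap (N ^ r))
    (hP : M (r - 1) ≤ (M (-r - 1)).comap (N ^ r)) :
    PowInducesIso N M r ↔ Function.Bijective (filGradedPiece.map (N ^ r) hQ hP) := by
  refine ⟨fun ⟨e, he⟩ => ?_, fun h => ⟨.ofBijective _ h, fun _ _ _ => rfl⟩⟩
  have map_eq : ⇑(filGradedPiece.map (N ^ r) hQ hP) = e := by
    ext z
    obtain ⟨⟨x, hx⟩, rfl⟩ := Submodule.Quotient.mk_surjective _ z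
    exact (he x hx (hQ hx)).symm
  exact map_eq ▸ e.bijective

theorem powInducesIso_iff (hM : ∀ r, ∀ x ∈ M r, N x ∈ M (r - 2)) (r : ℕ) :
    PowInducesIso N M r ↔
      M r ⊓ (M (-r - 1)).comap (N ^ r) ≤ M (r - 1) ∧ M (-r) ≤ (M r).map (N ^ r) ⊔ M (-r - 1) := by
  rw [powInducesIso_iff_bijective (le_comap_pow_of_sub hM r (by ring))
    (le_comap_pow_of_sub hM r (by ring)), Function.Bijective,
    filGradedPiece.map_injective_iff, filGradedPiece.map_surjective_iff]

end PowInducesIso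

namespace IsMonodromyFiltration

variable {R A : Type*} [CommRing R] [AddCommGroup A] [Module R A] {N : A →ₗ[R] A}
  {M M' : ℤ → Submodule R A} {n n' : ℕ}

theorem map_pow_eq (hM : IsMonodromyFiltration N n M) (r : ℕ) :
    (M r).map (N ^ r) = M (-r) := by
  obtain ⟨hmono, -, hbot, hshift, hiso⟩ := hM
  refine le_antisymm
    (Submodule.map_le_iff_le_comap.2 <| le_comap_pow_of_sub hshift r (by ring)) ?_
  induction r using Nat.strong_decreasing_induction with
  | base => exact ⟨n, fun r hr => by simp [hbot (-r) (by omega)]⟩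
  | step r ih =>
    refine ((powInducesIso_iff hshift r).1 (hiso r)).2.trans (sup_le le_rfl ?_)
    calc M (-r - 1) = M (-(r + 1 : ℕ)) := by congr 1; push_cast; ring
      _ ≤ (M (r + 1 : ℕ)).map (N ^ (r + 1)) := ih _ r.lt_succ_self
      _ = ((M (r + 1 : ℕ)).map N).map (N ^ r) := by
        rw [pow_succ, Module.End.mul_eq_comp, Submodule.map_comp]
      _ ≤ (M r).map (N ^ r) := Submodule.map_mono <| Submodule.map_le_iff_le_comap.2
        fun x hx => hmono (by omega) (hshift _ x hx)

theorem eq_inf_comap_map_pow (hM : IsMonodromyFiltration N n M) (r : ℕ) :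
    M r = M (r + 1 : ℕ) ⊓ ((M (r + 2 : ℕ)).map (N ^ (r + 2))).comap (N ^ (r + 1)) := by
  rw [hM.map_pow_eq]
  obtain ⟨hmono, -, -, hshift, hiso⟩ := hM
  refine le_antisymm (le_inf (hmono (by omega))
    (le_comap_pow_of_sub hshift _ (by push_cast; ring))) ?_
  have injective_mod := ((powInducesIso_iff hshift (r + 1)).1 (hiso (r + 1))).1
  convert injective_mod using 3
  · push_cast; ring_nf
  · simp

theorem unique (hM : IsMonodromyFiltration N n M) (hM' : IsMonodromyFiltration N n' M') :
    M = M' := by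
  have natCast_eq (r : ℕ) : M r = M' r := by
    induction r using Nat.strong_decreasing_induction with
    | base =>
      exact ⟨max n n', fun r hr => (hM.2.1 r (by omega)).trans (hM'.2.1 r (by omega)).symm⟩
    | step r ih =>
      rw [hM.eq_inf_comap_map_pow, hM'.eq_inf_comap_map_pow, ih (r + 1) (by omega),
        ih (r + 2) (by omega)]
  ext1 r
  obtain ⟨k, rfl | rfl⟩ := r.eq_nat_or_neg
  · exact natCast_eq k
  · rw [← hM.map_pow_eq, ← hM'.map_pow_eq, natCast_eq]

end IsMonodromyFiltration

section ConvFil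

variable {R A : Type*} [CommRing R] [AddCommGroup A] [Module R A] {N : A →ₗ[R] A}

theorem kerFil_monotone (N : A →ₗ[R] A) : Monotone (kerFil N) := fun _ _ hpq _ hx =>
  Module.End.pow_map_zero_of_le (Nat.succ_le_succ hpq) hx

theorem map_pow_kerFil_inf_imFil (N : A →ₗ[R] A) (k p q : ℕ) :
    (kerFil N (p + k) ⊓ imFil N q).map (N ^ k) = kerFil N p ⊓ imFil N (q + k) := by
  have comap_ker : (kerFil N p).comap (N ^ k) = kerFil N (p + k) := by
    rw [kerFil, ← LinearMap.ker_comp, ← Module.End.mul_eq_comp, ← pow_add, kerFil,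
      Nat.add_right_comm]
  have map_im : (imFil N q).map (N ^ k) = imFil N (q + k) := by
    rw [imFil, ← LinearMap.range_comp, ← Module.End.mul_eq_comp, ← pow_add, imFil, add_comm]
  rw [← comap_ker, ← map_im, inf_comm, inf_comm _ (Submodule.map _ _),
    Submodule.map_inf_eq_map_inf_comap]

theorem kerFil_inf_imFil_le_convFil {p q : ℕ} {r : ℤ} (hpq : (p : ℤ) - q = r) :
    kerFil N p ⊓ imFil N q ≤ convFil N r :=
  le_iSup_of_le ⟨(p, q), hpq⟩ le_rfl

theorem convFil_le_iff {r : ℤ} {P : Submodule R A} :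
    convFil N r ≤ P ↔ ∀ p q : ℕ, (p : ℤ) - q = r → kerFil N p ⊓ imFil N q ≤ P := by
  simp only [convFil, iSup_le_iff, Subtype.forall, Prod.forall]

theorem ker_pow_le_convFil (N : A →ₗ[R] A) (k : ℕ) :
    LinearMap.ker (N ^ k) ≤ convFil N (k - 1) := by
  cases k with
  | zero => simp [Module.End.one_eq_id]
  | succ p =>
    calc LinearMap.ker (N ^ (p + 1)) = kerFil N p ⊓ imFil N 0 := by
          simp [kerFil, imFil, Module.End.one_eq_id]
      _ ≤ _ := kerFil_inf_imFil_le_convFil (by simp)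

theorem convFil_monotone (N : A →ₗ[R] A) : Monotone (convFil N) :=
  monotone_int_of_le_succ fun _ => convFil_le_iff.2 fun p q hpq =>
    (inf_le_inf_right _ (kerFil_monotone N p.le_succ)).trans
      (kerFil_inf_imFil_le_convFil (by omega))

theorem apply_mem_convFil (r : ℤ) : ∀ x ∈ convFil N r, N x ∈ convFil N (r - 2) := by
  suffices convFil N r ≤ (convFil N (r - 2)).comap N from this
  refine convFil_le_iff.2 fun p q hpq => ?_
  cases p with
  | zero =>
    have ker_le : kerFil N 0 ≤ (convFil N (r - 2)).comap N := by
      simp [kerFil, LinearMap.ker_le_comap]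
    exact inf_le_left.trans ker_le
  | succ p =>
    rw [← Submodule.map_le_iff_le_comap]
    calc (kerFil N (p + 1) ⊓ imFil N q).map N = kerFil N p ⊓ imFil N (q + 1) := by
          simpa using map_pow_kerFil_inf_imFil N 1 p q
      _ ≤ convFil N (r - 2) := kerFil_inf_imFil_le_convFil (by omega)

theorem map_pow_convFil (N : A →ₗ[R] A) (r : ℕ) :
    (convFil N r).map (N ^ r) = convFil N (-r) := by
  refine le_antisymm (Submodule.map_le_iff_le_comap.2 <|
    le_comap_pow_of_sub apply_mem_convFil r (by ring)) (convFil_le_iff.2 fun p q hpq => ?_)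
  obtain rfl : q = p + r := by omega
  rw [← map_pow_kerFil_inf_imFil]
  exact Submodule.map_mono (kerFil_inf_imFil_le_convFil (by simp))

theorem comap_pow_convFil_le (N : A →ₗ[R] A) (r : ℕ) :
    (convFil N (-r - 1)).comap (N ^ r) ≤ convFil N (r - 1) := by
  have map_le : (convFil N (r + 1 : ℕ)).map N ≤ convFil N (r - 1) := by
    rw [show (r : ℤ) - 1 = (r + 1 : ℕ) - 2 by push_cast; ring]
    exact Submodule.map_le_iff_le_comap.2 (apply_mem_convFil _)
  calc (convFil N (-r - 1)).comap (N ^ r)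
      = (((convFil N (r + 1 : ℕ)).map N).map (N ^ r)).comap (N ^ r) := by
        rw [← Submodule.map_comp, ← Module.End.mul_eq_comp, ← pow_succ, map_pow_convFil]
        congr 2
        push_cast
        ring
    _ = (convFil N (r + 1 : ℕ)).map N ⊔ LinearMap.ker (N ^ r) := Submodule.comap_map_eq _ _
    _ ≤ convFil N (r - 1) := sup_le map_le (ker_pow_le_convFil N r)

theorem powInducesIso_convFil (N : A →ₗ[R] A) (r : ℕ) : PowInducesIso N (convFil N) r :=
  (powInducesIso_iff apply_mem_convFil r).2
    ⟨inf_le_right.trans (comap_pow_convFil_le N r), (map_pow_convFil N r).ge.trans le_sup_left⟩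

theorem isMonodromyFiltration_convFil {n : ℕ} (hN : N ^ (n + 1) = 0) :
    IsMonodromyFiltration N n (convFil N) := by
  have top_le : ⊤ ≤ convFil N n := by simpa [hN] using ker_pow_le_convFil N (n + 1)
  have eq_bot : convFil N (-(n + 1 : ℕ)) = ⊥ := by
    rw [← map_pow_convFil, hN, Submodule.map_zero]
  exact ⟨convFil_monotone N, fun r hr => top_le_iff.1 (top_le.trans (convFil_monotone N hr)),
    fun r hr => le_bot_iff.1 ((convFil_monotone N (by omega)).trans eq_bot.le),
    apply_mem_convFil, powInducesIso_convFil N⟩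

end ConvFil

/-- If `N^(n+1) = 0` then the convolution filtration of the kernel and
image filtrations is the monodromy filtration of `N`, and it is the unique increasing
filtration with these properties. -/
theorem stmt_1 {R A : Type*} [CommRing R] [AddCommGroup A] [Module R A]
    (N : A →ₗ[R] A) (n : ℕ) (hN : N ^ (n + 1) = 0) :
    IsMonodromyFiltration N n (convFil N) ∧
      ∀ M : ℤ → Submodule R A, IsMonodromyFiltration N n M → M = convFil N := by
  have hconv := isMonodromyFiltration_convFil hN
  exact ⟨hconv, fun _ hM => hM.unique hconv⟩
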